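/- Usefulness (correctness) of exponential steps: let p = P⟨x⟩ →ue q = P⟨v^α⟩ with P ∈ E@_{U,A} and P(x) = v. Then there exists a program r and a reduction sequence d : q →ue^k →um r (k useful exponential steps followed by one useful multiplicative step) such that: (1) the evaluation context of each →ue step in d is in E@_{U,A} and the evaluation context of the final →um step is in Em_{U,A}; and (2) k ≥ 0 equals the number of applications of rule (e_NA) in the derivation of P ∈ E@_{U,A}. -/

import Mathlib

/-! ## Terms of the pure λ-calculus (named syntax) -/

inductive Term : Type
  | var : ℕ → Term
  | lam : ℕ → Term → Term
  | app : Term → Term → Term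
  deriving DecidableEq

namespace Term

/-- Size of a term: |x| = 1, |λx.t| = |t|+1, |t u| = |t|+|u|+1. -/
def size : Term → ℕ
  | var _ => 1
  | lam _ t => size t + 1
  | app t u => size t + size u + 1

/-- Free variables of a term. -/
def fv : Term → Finset ℕ
  | var x => {x}
  | lam x t => (fv t).erase x
  | app t u => fv t ∪ fv u

/-- Meta-level substitution t{x←u}. -/
def subst (x : ℕ) (u : Term) : Term → Term
  | var y => if y = x then u else var y
  | lam y t => if y = x then lam y t else lam y (subst x u t)
  | app t s => app (subst x u t) (subst x u s)

def isVarB : Term → Bool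
  | var _ => true
  | _ => false

/-- Values are abstractions (variables are not values). -/
def IsValue (t : Term) : Prop := ∃ x u, t = lam x u

/-- Needed variables of a term. -/
def nv : Term → Finset ℕ
  | var x => {x}
  | lam _ _ => ∅
  | app t u => nv t ∪ nv u

/-- Applied variables of a term. -/
def anv : Term → Finset ℕ
  | var _ => ∅
  | lam _ _ => ∅
  | app (var x) u => insert x (anv u)
  | app (lam y t) u => anv (lam y t) ∪ anv u
  | app (app t s) u => anv (app t s) ∪ anv u

/-- Unapplied variables of a term. -/
def unv : Term → Finset ℕ
  | var x => {x}
  | lam _ _ => ∅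
  | app (var _) u => unv u
  | app (lam y t) u => unv (lam y t) ∪ unv u
  | app (app t s) u => unv (app t s) ∪ unv u

end Term

/-! ## Inert terms and fireballs: i ::= x | i f,  f ::= v | i -/

mutual
  inductive Term.Inert : Term → Prop
    | var (x : ℕ) : Term.Inert (Term.var x)
    | app {i f : Term} : Term.Inert i → Term.Fireball f → Term.Inert (Term.app i f)
  inductive Term.Fireball : Term → Prop
    | val {x : ℕ} {t : Term} : Term.Fireball (Term.lam x t)
    | inert {i : Term} : Term.Inert i → Term.Fireball i
end

/-- Non-variable inert terms i⁺. -/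
def Term.InertPlus (t : Term) : Prop := t.Inert ∧ ∀ x, t ≠ Term.var x

/-! ## β-reduction (closure of the root rule under arbitrary term contexts) -/

inductive Beta : Term → Term → Prop
  | beta (x : ℕ) (t u : Term) : Beta (Term.app (Term.lam x t) u) (Term.subst x u t)
  | lam {t t' : Term} (x : ℕ) : Beta t t' → Beta (Term.lam x t) (Term.lam x t')
  | appL {t t' : Term} (u : Term) : Beta t t' → Beta (Term.app t u) (Term.app t' u)
  | appR {u u' : Term} (t : Term) : Beta u u' → Beta (Term.app t u) (Term.app t u')

/-- `iterRel R n a b`: an n-step R-reduction sequence from a to b. -/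
def iterRel {α : Type} (R : α → α → Prop) : ℕ → α → α → Prop
  | 0 => Eq
  | n + 1 => fun a c => ∃ b, R a b ∧ iterRel R n b c

/-! ## Environments and programs -/

/-- Environments are finite lists of explicit substitutions, written
left-to-right, i.e. E[x←t] is `E ++ [(x, t)]`. -/
abbrev Env := List (ℕ × Term)

def Env.dom (E : Env) : Finset ℕ := (E.map Prod.fst).toFinset

/-- Content of the leftmost explicit substitution on x. -/
def Env.lookupES : Env → ℕ → Option Term
  | [], _ => none
  | (y, t) :: E, x => if y = x then some t else Env.lookupES E x

structure Program where
  tm : Term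
  env : Env

/-- p@[x←u] : appending an explicit substitution at the end of the environment. -/
def Program.appES (p : Program) (x : ℕ) (u : Term) : Program := ⟨p.tm, p.env ++ [(x, u)]⟩

/-- One step of the needed-variables computation along an explicit substitution. -/
def nvStep (V : Finset ℕ) (e : ℕ × Term) : Finset ℕ :=
  if e.1 ∈ V then (V.erase e.1) ∪ Term.nv e.2 else V

/-- Needed variables of a program. -/
def Program.nv (p : Program) : Finset ℕ := p.env.foldl nvStep p.tm.nv

/-- One step of the applied-variables computation (carrying needed variables). -/
def anvStep : Finset ℕ × Finset ℕ → ℕ × Term → Finset ℕ × Finset ℕ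
  | (N, A), (x, u) =>
    (nvStep N (x, u),
      if x ∈ N then
        match u with
        | Term.var y => if x ∈ A then (A.erase x) ∪ {y} else A.erase x
        | _ => (A.erase x) ∪ Term.anv u
      else A)

/-- Applied variables of a program. -/
def Program.anv (p : Program) : Finset ℕ :=
  (p.env.foldl anvStep (p.tm.nv, p.tm.anv)).2

/-- One step of the unapplied-variables computation (carrying needed variables). -/
def unvStep : Finset ℕ × Finset ℕ → ℕ × Term → Finset ℕ × Finset ℕ
  | (N, U), (x, u) =>
    (nvStep N (x, u),
      if x ∈ U ∨ (x ∈ N ∧ u.isVarB = false) then (U.erase x) ∪ Term.unv u else U)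

/-- Unapplied variables of a program. -/
def Program.unv (p : Program) : Finset ℕ :=
  (p.env.foldl unvStep (p.tm.nv, p.tm.unv)).2

/-- Unfolding of a program into a term: unf(t, ε) = t, unf(t, E[x←u]) = unf(t, E){x←u}. -/
def Program.unf (p : Program) : Term :=
  p.env.foldl (fun s e => Term.subst e.1 e.2 s) p.tm

/-! ## Term contexts H ::= ⟨·⟩ | H t | i H (i inert, enforced by WF) -/

inductive HCtx : Type
  | hole : HCtx
  | appL : HCtx → Term → HCtx
  | appR : Term → HCtx → HCtx

namespace HCtx

/-- Well-formedness: in i H, the left part i must be an inert term. -/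
def WF : HCtx → Prop
  | hole => True
  | appL H _ => WF H
  | appR i H => Term.Inert i ∧ WF H

def plug : HCtx → Term → Term
  | hole, t => t
  | appL H u, t => Term.app (plug H t) u
  | appR i H, t => Term.app i (plug H t)

def nv : HCtx → Finset ℕ
  | hole => ∅
  | appL H _ => nv H
  | appR i H => Term.nv i ∪ nv H

def anv : HCtx → Finset ℕ
  | hole => ∅
  | appL H _ => anv H
  | appR i H => Term.anv i ∪ anv H

def unv : HCtx → Finset ℕ
  | hole => ∅
  | appL H _ => unv H
  | appR i H => Term.unv i ∪ unv H

end HCtx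

/-- Applicative term contexts H@ ::= ⟨·⟩ t | H@ t | i H@. -/
inductive HCtx.IsApp : HCtx → Prop
  | base (t : Term) : HCtx.IsApp (HCtx.appL HCtx.hole t)
  | appL {H : HCtx} (t : Term) : HCtx.IsApp H → HCtx.IsApp (HCtx.appL H t)
  | appR {H : HCtx} {i : Term} : Term.Inert i → HCtx.IsApp H → HCtx.IsApp (HCtx.appR i H)

/-! ## Program contexts: hole in the term part (tc) or inside an ES (ec) -/

inductive PCtx : Type
  | tc : HCtx → Env → PCtx
  | ec : Term → Env → ℕ → HCtx → Env → PCtx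

namespace PCtx

/-- P@[x←u] : appending an explicit substitution at the end of the environment of P. -/
def appES : PCtx → ℕ → Term → PCtx
  | tc H E, x, u => tc H (E ++ [(x, u)])
  | ec t E1 y H E2, x, u => ec t E1 y H (E2 ++ [(x, u)])

/-- Plugging a term into a program context. -/
def plugT : PCtx → Term → Program
  | tc H E, t => ⟨H.plug t, E⟩
  | ec u E1 x H E2, t => ⟨u, E1 ++ (x, H.plug t) :: E2⟩

/-- Plugging a program into a program context: the plugged environment is appended
right after the position of the hole. -/
def plugP : PCtx → Program → Program
  | tc H E, q => ⟨H.plug q.tm, q.env ++ E⟩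
  | ec u E1 x H E2, q => ⟨u, E1 ++ (x, H.plug q.tm) :: (q.env ++ E2)⟩

/-- Variables bound by the environment of P. -/
def dom : PCtx → Finset ℕ
  | tc _ E => Env.dom E
  | ec _ E1 y _ E2 => insert y (Env.dom E1 ∪ Env.dom E2)

/-- P(x): content of the leftmost explicit substitution on x occurring after the hole. -/
def lookup : PCtx → ℕ → Option Term
  | tc _ E, x => Env.lookupES E x
  | ec _ _ _ _ E2, x => Env.lookupES E2 x

/-- (P⟨x⟩)@[x←H] : plug the variable x in the hole of P and append the ES [x←H],
whose content H now contains the hole. -/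
def hered (P : PCtx) (x : ℕ) (H : HCtx) : PCtx :=
  ec (P.plugT (Term.var x)).tm (P.plugT (Term.var x)).env x H []

end PCtx

/-! ## Open CbNeed evaluation contexts P ∈ E_V -/

inductive OEC : PCtx → Finset ℕ → Prop
  | ax {H : HCtx} : H.WF → OEC (PCtx.tc H []) H.nv
  | gc {P : PCtx} {V : Finset ℕ} {x : ℕ} (t : Term) :
      OEC P V → x ∉ V → x ∉ P.dom → OEC (P.appES x t) V
  | inert {P : PCtx} {V : Finset ℕ} {x : ℕ} {i : Term} :
      OEC P V → x ∈ V → Term.Inert i → x ∉ P.dom →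
      OEC (P.appES x i) ((V.erase x) ∪ i.nv)
  | her {P : PCtx} {V : Finset ℕ} {x : ℕ} {H : HCtx} :
      OEC P V → x ∉ V → x ∉ P.dom → H.WF →
      OEC (P.hered x H) (V ∪ H.nv)

/-! ## Open CbNeed reduction -/

inductive StepOM : Program → Program → Prop
  | mk {P : PCtx} {V : Finset ℕ} {x : ℕ} {t u : Term} :
      OEC P V →
      StepOM (P.plugT (Term.app (Term.lam x t) u)) (P.plugP ⟨t, [(x, u)]⟩)

inductive StepOE : Program → Program → Prop
  | mk {P : PCtx} {V : Finset ℕ} {x : ℕ} {v : Term} :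
      OEC P V → P.lookup x = some v → v.IsValue →
      StepOE (P.plugT (Term.var x)) (P.plugT v)

def StepOnd (p q : Program) : Prop := StepOM p q ∨ StepOE p q

/-! ## Open CbNeed normal programs -/

inductive PInert : Program → Prop
  | ax {i : Term} : i.Inert → PInert ⟨i, []⟩
  | inert {p : Program} {x : ℕ} {i : Term} :
      PInert p → x ∈ p.nv → i.Inert → PInert (p.appES x i)
  | gc {p : Program} {x : ℕ} (t : Term) :
      PInert p → x ∉ p.nv → PInert (p.appES x t)

inductive PAbs : Program → Prop
  | ax {v : Term} : v.IsValue → PAbs ⟨v, []⟩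
  | gc {p : Program} {x : ℕ} (t : Term) : PAbs p → PAbs (p.appES x t)

def ONorm (p : Program) : Prop := PInert p ∨ PAbs p

/-! ## Useful Open CbNeed: multiplicative and exponential evaluation contexts -/

def upd (S : Finset ℕ) (x y : ℕ) : Finset ℕ := if x ∈ S then (S.erase x) ∪ {y} else S

inductive MEC : PCtx → Finset ℕ → Finset ℕ → Prop
  | ax {H : HCtx} : H.WF → MEC (PCtx.tc H []) H.unv H.anv
  | var {P : PCtx} {U A : Finset ℕ} {x y : ℕ} :
      MEC P U A → x ∈ U ∪ A → x ∉ P.dom →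
      MEC (P.appES x (Term.var y)) (upd U x y) (upd A x y)
  | gc {P : PCtx} {U A : Finset ℕ} {x : ℕ} (t : Term) :
      MEC P U A → x ∉ U ∪ A → x ∉ P.dom → MEC (P.appES x t) U A
  | inert {P : PCtx} {U A : Finset ℕ} {x : ℕ} {i : Term} :
      MEC P U A → x ∈ U ∪ A → i.InertPlus → x ∉ P.dom →
      MEC (P.appES x i) ((U.erase x) ∪ i.unv) ((A.erase x) ∪ i.anv)
  | val {P : PCtx} {U A : Finset ℕ} {x : ℕ} {v : Term} :
      MEC P U A → x ∈ U → x ∉ A → v.IsValue → x ∉ P.dom →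
      MEC (P.appES x v) (U.erase x) A
  | her {P : PCtx} {U A : Finset ℕ} {x : ℕ} {H : HCtx} :
      MEC P U A → x ∉ U ∪ A → x ∉ P.dom → H.WF →
      MEC (P.hered x H) (U ∪ H.unv) (A ∪ H.anv)

/-- Exponential evaluation contexts P ∈ E@_{U,A}; the last (natural number) index
counts the number of applications of rule (e_NA) in the derivation. -/
inductive EEC : PCtx → Finset ℕ → Finset ℕ → ℕ → Prop
  | ax1 {H : HCtx} : H.IsApp → EEC (PCtx.tc H []) H.unv H.anv 0
  | ax2 {P : PCtx} {U A : Finset ℕ} {x : ℕ} {H : HCtx} :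
      MEC P U A → x ∉ U ∪ A → x ∉ P.dom → H.IsApp →
      EEC (P.hered x H) ((U.erase x) ∪ H.unv) (A ∪ H.anv) 0
  | var {P : PCtx} {U A : Finset ℕ} {k : ℕ} {x y : ℕ} :
      EEC P U A k → x ∈ U ∪ A → x ∉ P.dom →
      EEC (P.appES x (Term.var y)) (upd U x y) (upd A x y) k
  | inert {P : PCtx} {U A : Finset ℕ} {k : ℕ} {x : ℕ} {i : Term} :
      EEC P U A k → x ∈ U ∪ A → i.InertPlus → x ∉ P.dom →
      EEC (P.appES x i) ((U.erase x) ∪ i.unv) ((A.erase x) ∪ i.anv) k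
  | gc {P : PCtx} {U A : Finset ℕ} {k : ℕ} {x : ℕ} (t : Term) :
      EEC P U A k → x ∉ U ∪ A → x ∉ P.dom → EEC (P.appES x t) U A k
  | val {P : PCtx} {U A : Finset ℕ} {k : ℕ} {x : ℕ} {v : Term} :
      EEC P U A k → x ∈ U → x ∉ A → v.IsValue → x ∉ P.dom →
      EEC (P.appES x v) (U.erase x) A k
  | na {P : PCtx} {U A : Finset ℕ} {k : ℕ} {x : ℕ} :
      EEC P U A k → x ∉ A → x ∉ P.dom →
      EEC (P.hered x HCtx.hole) (U.erase x) A (k + 1)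

/-! ## Useful Open CbNeed reduction -/

inductive StepUM : Program → Program → Prop
  | mk {P : PCtx} {U A : Finset ℕ} {x : ℕ} {t u : Term} :
      MEC P U A →
      StepUM (P.plugT (Term.app (Term.lam x t) u)) (P.plugP ⟨t, [(x, u)]⟩)

inductive StepUE : Program → Program → Prop
  | mk {P : PCtx} {U A : Finset ℕ} {k : ℕ} {x : ℕ} {v : Term} :
      EEC P U A k → P.lookup x = some v → v.IsValue →
      StepUE (P.plugT (Term.var x)) (P.plugT v)

def StepUnd (p q : Program) : Prop := StepUM p q ∨ StepUE p q

/-- Useful multiplicative steps whose evaluation context lies in Em_{U,A}. -/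
def StepUMat (U A : Finset ℕ) (p q : Program) : Prop :=
  ∃ (P : PCtx) (x : ℕ) (t u : Term), MEC P U A ∧
    p = P.plugT (Term.app (Term.lam x t) u) ∧ q = P.plugP ⟨t, [(x, u)]⟩

/-- Useful exponential steps whose evaluation context lies in E@_{U,A}. -/
def StepUEat (U A : Finset ℕ) (p q : Program) : Prop :=
  ∃ (P : PCtx) (k : ℕ) (x : ℕ) (v : Term), EEC P U A k ∧
    P.lookup x = some v ∧ v.IsValue ∧
    p = P.plugT (Term.var x) ∧ q = P.plugT v

/-! ## Useful normal-form predicates -/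

inductive GenVar : ℕ → Program → Prop
  | ax (x : ℕ) : GenVar x ⟨Term.var x, []⟩
  | her {x : ℕ} {p : Program} (y : ℕ) : GenVar x p → GenVar y (p.appES x (Term.var y))
  | gc {x z : ℕ} {p : Program} (t : Term) : GenVar x p → z ≠ x → GenVar x (p.appES z t)

inductive UfAbs : Program → Prop
  | ax {v : Term} : v.IsValue → UfAbs ⟨v, []⟩
  | gv {p : Program} {x : ℕ} {v : Term} : GenVar x p → v.IsValue → UfAbs (p.appES x v)
  | gc {p : Program} {x : ℕ} (t : Term) : UfAbs p → UfAbs (p.appES x t)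

inductive UfInert : Program → Prop
  | ax {i : Term} : i.InertPlus → UfInert ⟨i, []⟩
  | gv {p : Program} {x : ℕ} {i : Term} : GenVar x p → i.InertPlus → UfInert (p.appES x i)
  | inert {p : Program} {x : ℕ} {i : Term} :
      UfInert p → x ∈ p.nv → i.Inert → UfInert (p.appES x i)
  | useless {p : Program} {x : ℕ} {v : Term} :
      UfInert p → x ∈ p.unv → x ∉ p.anv → v.IsValue → UfInert (p.appES x v)
  | gc {p : Program} {x : ℕ} (t : Term) : UfInert p → x ∉ p.nv → UfInert (p.appES x t)

def UfNorm (p : Program) : Prop := UfInert p ∨ UfAbs p ∨ ∃ x, GenVar x p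

/-! ## The size-exploding family -/

/-- t₁ := λx.λy. y x x  (x := 0, y := 1). -/
def t1 : Term := Term.lam 0 (Term.lam 1 (Term.app (Term.app (Term.var 1) (Term.var 0)) (Term.var 0)))

/-- λy. y x x. -/
def tbody : Term := Term.lam 1 (Term.app (Term.app (Term.var 1) (Term.var 0)) (Term.var 0))

/-- The family t_n (values for n ≥ 1; tfam 0 is a dummy). -/
def tfam : ℕ → Term
  | 0 => t1
  | 1 => t1
  | n + 2 => Term.lam 0 (Term.app (tfam (n + 1)) tbody)

/-- I := λz.z. -/
def Idt : Term := Term.lam 2 (Term.var 2)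

/-- The family u_n : u₀ = I, u_{n+1} = λy. y u_n u_n. -/
def ufam : ℕ → Term
  | 0 => Idt
  | n + 1 => Term.lam 1 (Term.app (Term.app (Term.var 1) (ufam n)) (ufam n))

theorem happ_split {H : HCtx} (h : H.IsApp) :
    ∃ (H' : HCtx) (u : Term), H'.WF ∧ H'.unv = H.unv ∧ H'.anv = H.anv ∧
      ∀ s, H'.plug (Term.app s u) = H.plug s := by
  induction h with
  | base t => exact ⟨HCtx.hole, t, trivial, rfl, rfl, fun _ => rfl⟩
  | appL t _ ih =>
    obtain ⟨H', u, h1, h2, h3, h4⟩ := ih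
    exact ⟨HCtx.appL H' t, u, h1, h2, h3, fun s => by simp [HCtx.plug, h4]⟩
  | appR hi _ ih =>
    obtain ⟨H', u, h1, h2, h3, h4⟩ := ih
    exact ⟨HCtx.appR _ H', u, ⟨hi, h1⟩, by simp [HCtx.unv, h2], by simp [HCtx.anv, h3],
      fun s => by simp [HCtx.plug, h4]⟩

theorem plugT_appES (P : PCtx) (x : ℕ) (u t : Term) :
    (P.appES x u).plugT t = (P.plugT t).appES x u := by
  cases P <;> simp [PCtx.appES, PCtx.plugT, Program.appES]

theorem dom_append (E F : Env) : Env.dom (E ++ F) = Env.dom E ∪ Env.dom F := by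
  simp [Env.dom]

theorem dom_plugT (P : PCtx) (t : Term) : Env.dom (P.plugT t).env = P.dom := by
  cases P with
  | tc H E => rfl
  | ec u E1 x H E2 =>
    ext a
    simp [PCtx.plugT, PCtx.dom, Env.dom]

theorem dom_appES (P : PCtx) (x : ℕ) (u : Term) :
    (P.appES x u).dom = insert x P.dom := by
  cases P <;> (ext a; simp [PCtx.appES, PCtx.dom, Env.dom]; try tauto)

theorem dom_hered (P : PCtx) (x : ℕ) (H : HCtx) :
    (P.hered x H).dom = insert x P.dom := by
  simp only [PCtx.hered, PCtx.dom, dom_plugT]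
  simp [Env.dom]

theorem lookupES_append_some {E : Env} {x : ℕ} {v : Term} (F : Env)
    (h : Env.lookupES E x = some v) : Env.lookupES (E ++ F) x = some v := by
  induction E with
  | nil => simp [Env.lookupES] at h
  | cons e E ih =>
    obtain ⟨y, t⟩ := e
    simp only [List.cons_append, Env.lookupES] at h ⊢
    split_ifs at h ⊢ with hy
    · exact h
    · exact ih h

theorem lookupES_append_new {E : Env} {x : ℕ} {v : Term} 
    (h : x ∉ Env.dom E) : Env.lookupES (E ++ [(x, v)]) x = some v := by
  induction E with
  | nil => simp [Env.lookupES]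
  | cons e E ih =>
    obtain ⟨y, t⟩ := e
    have h1 : x ≠ y ∧ x ∉ Env.dom E := by
      simpa [Env.dom] using h
    simp only [List.cons_append, Env.lookupES]
    rw [if_neg (Ne.symm h1.1)]
    exact ih h1.2

theorem lookup_appES_some {P : PCtx} {x : ℕ} {v : Term} (y : ℕ) (u : Term)
    (h : P.lookup x = some v) : (P.appES y u).lookup x = some v := by
  cases P <;> exact lookupES_append_some _ h

theorem lookup_appES_new {P : PCtx} {x : ℕ} {v : Term}
    (h : x ∉ P.dom) : (P.appES x v).lookup x = some v := by
  cases P with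
  | tc H E => exact lookupES_append_new h
  | ec u E1 y H E2 =>
    apply lookupES_append_new
    simp [PCtx.dom] at h
    exact h.2.2

theorem eec_zero {P : PCtx} {U A : Finset ℕ} {k : ℕ} (h : EEC P U A k) (hk : k = 0) :
    ∃ (P' : PCtx) (u : Term), MEC P' U A ∧ P'.dom = P.dom ∧
      ∀ s, P'.plugT (Term.app s u) = P.plugT s := by
  induction h with
  | ax1 hH =>
    obtain ⟨H', u, h1, h2, h3, h4⟩ := happ_split hH
    refine ⟨PCtx.tc H' [], u, h2 ▸ h3 ▸ MEC.ax h1, rfl, fun s => by simp [PCtx.plugT, h4]⟩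
  | @ax2 P U A x H hm hx hd hH =>
    obtain ⟨H', u, h1, h2, h3, h4⟩ := happ_split hH
    refine ⟨P.hered x H', u, ?_, by simp [dom_hered], fun s => by
      simp [PCtx.hered, PCtx.plugT, h4]⟩
    have hxU : x ∉ U := fun h => hx (Finset.mem_union_left _ h)
    rw [Finset.erase_eq_of_notMem hxU, ← h2, ← h3]
    exact MEC.her hm hx hd h1
  | var _ hx hd ih =>
    obtain ⟨P', u, h1, h2, h3⟩ := ih hk
    exact ⟨_, u, MEC.var h1 hx (h2 ▸ hd), by simp [dom_appES, h2],
      fun s => by simp [plugT_appES, h3]⟩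
  | inert _ hx hi hd ih =>
    obtain ⟨P', u, h1, h2, h3⟩ := ih hk
    exact ⟨_, u, MEC.inert h1 hx hi (h2 ▸ hd), by simp [dom_appES, h2],
      fun s => by simp [plugT_appES, h3]⟩
  | gc t _ hx hd ih =>
    obtain ⟨P', u, h1, h2, h3⟩ := ih hk
    exact ⟨_, u, MEC.gc t h1 hx (h2 ▸ hd), by simp [dom_appES, h2],
      fun s => by simp [plugT_appES, h3]⟩
  | val _ hx hA hv hd ih =>
    obtain ⟨P', u, h1, h2, h3⟩ := ih hk
    exact ⟨_, u, MEC.val h1 hx hA hv (h2 ▸ hd), by simp [dom_appES, h2],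
      fun s => by simp [plugT_appES, h3]⟩
  | na => omega

theorem eec_succ {v : Term} (hv : v.IsValue) {P : PCtx} {U A : Finset ℕ} {k : ℕ}
    (h : EEC P U A k) : ∀ n, k = n + 1 →
    ∃ (P' : PCtx) (x : ℕ), EEC P' U A n ∧ P'.dom = P.dom ∧ P'.lookup x = some v ∧
      P.plugT v = P'.plugT (Term.var x) := by
  induction h with
  | ax1 => intro n hn; omega
  | ax2 => intro n hn; omega
  | var _ hx hd ih =>
    intro n hn
    obtain ⟨P', z, h1, h2, h3, h4⟩ := ih n hn
    exact ⟨_, z, EEC.var h1 hx (h2 ▸ hd), by simp [dom_appES, h2],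
      lookup_appES_some _ _ h3, by simp [plugT_appES, h4]⟩
  | inert _ hx hi hd ih =>
    intro n hn
    obtain ⟨P', z, h1, h2, h3, h4⟩ := ih n hn
    exact ⟨_, z, EEC.inert h1 hx hi (h2 ▸ hd), by simp [dom_appES, h2],
      lookup_appES_some _ _ h3, by simp [plugT_appES, h4]⟩
  | gc t _ hx hd ih =>
    intro n hn
    obtain ⟨P', z, h1, h2, h3, h4⟩ := ih n hn
    exact ⟨_, z, EEC.gc t h1 hx (h2 ▸ hd), by simp [dom_appES, h2],
      lookup_appES_some _ _ h3, by simp [plugT_appES, h4]⟩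
  | val _ hx hA hw hd ih =>
    intro n hn
    obtain ⟨P', z, h1, h2, h3, h4⟩ := ih n hn
    exact ⟨_, z, EEC.val h1 hx hA hw (h2 ▸ hd), by simp [dom_appES, h2],
      lookup_appES_some _ _ h3, by simp [plugT_appES, h4]⟩
  | @na P U A k x hP hA hd ih =>
    intro n hn
    obtain rfl : k = n := by omega
    refine ⟨P.appES x v, x, ?_, by simp [dom_appES, dom_hered], lookup_appES_new hd, ?_⟩
    · by_cases hU : x ∈ U
      · exact EEC.val hP hU hA hv hd
      · rw [Finset.erase_eq_of_notMem hU]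
        exact EEC.gc v hP (by simp [hU, hA]) hd
    · rw [plugT_appES]
      simp [PCtx.hered, PCtx.plugT, Program.appES, HCtx.plug]

theorem eec_main {v : Term} (hv : v.IsValue) (U A : Finset ℕ) (k : ℕ) :
    ∀ P : PCtx, EEC P U A k → ∃ q' r : Program,
      iterRel (StepUEat U A) k (P.plugT v) q' ∧ StepUMat U A q' r := by
  induction k with
  | zero =>
    intro P h
    obtain ⟨P', u, h1, -, h3⟩ := eec_zero h rfl
    obtain ⟨y, t, rfl⟩ := hv
    exact ⟨_, _, rfl, P', y, t, u, h1, (h3 _).symm, rfl⟩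
  | succ n ih =>
    intro P h
    obtain ⟨P', x, h1, -, h3, h4⟩ := eec_succ hv h n rfl
    obtain ⟨q', r, h5, h6⟩ := ih P' h1
    exact ⟨q', r, ⟨P'.plugT v, ⟨P', n, x, v, h1, h3, hv, h4, rfl⟩, h5⟩, h6⟩

/-- usefulness (correctness) of exponential steps: a useful exponential
step q = P⟨v⟩ of context P ∈ E@_{U,A} is followed by k useful exponential steps with
contexts in E@_{U,A} and then one useful multiplicative step with context in Em_{U,A},
where k is the number of applications of rule (e_NA) in the derivation of P ∈ E@_{U,A}. -/
theorem usefulness_of_exponential_steps :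
    ∀ (P : PCtx) (U A : Finset ℕ) (k : ℕ) (x : ℕ) (v : Term),
      EEC P U A k → P.lookup x = some v → v.IsValue →
      ∃ q' r : Program,
        iterRel (StepUEat U A) k (P.plugT v) q' ∧ StepUMat U A q' r := by
  intro P U A k x v h _ hv
  exact eec_main hv U A k P h
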